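/- Let G be a graph with independence number α = α(G) and let t ≥ 8·4^α be an integer. Let M be a perfect matching of G and 𝒞 a set of vertex-disjoint M-alternating cycles such that |𝒞| ≤ 10t³, |w_M(C)| ≤ 2t for every C ∈ 𝒞, and the cycles of 𝒞 contain at least 1000t⁶ blue edges and at least 1000t⁶ red edges in total. Then 𝒞 contains a 0-skip set. -/

import Mathlib

open Finset

/-- `M` is (the edge set of) a perfect matching of `G`: all its edges are edges of `G` and
every vertex belongs to exactly one edge of `M`. -/
def IsPM {V : Type*} [DecidableEq V] (G : SimpleGraph V) (M : Finset (Sym2 V)) : Prop :=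
  ↑M ⊆ G.edgeSet ∧ ∀ v : V, ∃! e, e ∈ M ∧ v ∈ e

/-- Number of red edges in the edge set `F` (the coloring `red` marks the red edges). -/
def redCount {V : Type*} [DecidableEq V] (red : Sym2 V → Bool) (F : Finset (Sym2 V)) : ℕ :=
  (F.filter fun e => red e = true).card

/-- Number of blue edges in the edge set `F`. -/
def blueCount {V : Type*} [DecidableEq V] (red : Sym2 V → Bool) (F : Finset (Sym2 V)) : ℕ :=
  (F.filter fun e => red e = false).card

/-- The weight `w_M(e)`: 0 for blue edges, +1 for red non-matching edges, −1 for red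
matching edges. -/
def wt {V : Type*} [DecidableEq V] (red : Sym2 V → Bool) (M : Finset (Sym2 V))
    (e : Sym2 V) : ℤ :=
  if red e then (if e ∈ M then -1 else 1) else 0

/-- `w_M(F)`, the total weight of an edge set `F`. -/
def wSum {V : Type*} [DecidableEq V] (red : Sym2 V → Bool) (M F : Finset (Sym2 V)) : ℤ :=
  ∑ e ∈ F, wt red M e

/-- A list of edges alternates with respect to the matching `M`: consecutive edges are
alternately in and out of `M`. -/
def altList {V : Type*} [DecidableEq V] (M : Finset (Sym2 V)) (l : List (Sym2 V)) : Prop :=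
  l.Chain' fun e f => ¬((e ∈ M) ↔ (f ∈ M))

/-- `C` is (the edge set of) an `M`-alternating cycle in `G`: it is traced by a cycle walk
whose edges alternate (cyclically) between `M` and non-`M` edges. -/
def IsAltCycle {V : Type*} [DecidableEq V] (G : SimpleGraph V)
    (M C : Finset (Sym2 V)) : Prop :=
  ∃ (v : V) (p : G.Walk v v), p.IsCycle ∧ p.edges.toFinset = C ∧
    altList M (p.edges ++ p.edges.take 1)

/-- `P` is (the edge set of) an `M`-alternating path in `G`. -/
def IsAltPath {V : Type*} [DecidableEq V] (G : SimpleGraph V)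
    (M P : Finset (Sym2 V)) : Prop :=
  ∃ (u v : V) (p : G.Walk u v), p.IsPath ∧ p.edges.toFinset = P ∧ altList M p.edges

/-- The symmetric difference of two edge sets. -/
def sd {V : Type*} [DecidableEq V] (M M' : Finset (Sym2 V)) : Finset (Sym2 V) :=
  (M \ M') ∪ (M' \ M)

/-- The set of vertices covered by an edge set. -/
def edgeVerts {V : Type*} (F : Finset (Sym2 V)) : Set V := {v | ∃ e ∈ F, v ∈ e}

/-- `𝒞` is a set of pairwise vertex-disjoint `M`-alternating cycles of `G`. -/
def IsAltCycleSet {V : Type*} [DecidableEq V] (G : SimpleGraph V) (M : Finset (Sym2 V))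
    (𝒞 : Finset (Finset (Sym2 V))) : Prop :=
  (∀ C ∈ 𝒞, IsAltCycle G M C) ∧
    (𝒞 : Set (Finset (Sym2 V))).Pairwise fun C C' => Disjoint (edgeVerts C) (edgeVerts C')

/-- A skip on the `M`-alternating cycle `C` (with respect to the coloring `red`):
two non-matching chords `e1 ≠ e2` of `C`, not edges of `C`, such that replacing two
stretches of `C` by them yields a strictly shorter `M`-alternating cycle `C'` whose weight
differs from that of `C` by at most 4 in absolute value. -/
structure Skip {V : Type*} [DecidableEq V] (G : SimpleGraph V) (red : Sym2 V → Bool)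
    (M C : Finset (Sym2 V)) where
  e1 : Sym2 V
  e2 : Sym2 V
  C' : Finset (Sym2 V)
  hne : e1 ≠ e2
  he1G : e1 ∈ G.edgeSet
  he2G : e2 ∈ G.edgeSet
  he1M : e1 ∉ M
  he2M : e2 ∉ M
  he1C : e1 ∉ C
  he2C : e2 ∉ C
  halt : IsAltCycle G M C'
  hmem1 : e1 ∈ C'
  hmem2 : e2 ∈ C'
  hsub : C' \ {e1, e2} ⊆ C
  hsmall : C'.card < C.card
  hwbound : |wSum red M C' - wSum red M C| ≤ 4

/-- The weight `w(S) = w_M(C') − w_M(C)` of a skip. -/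
def Skip.w {V : Type*} [DecidableEq V] {G : SimpleGraph V} {red : Sym2 V → Bool}
    {M C : Finset (Sym2 V)} (S : Skip G red M C) : ℤ :=
  wSum red M S.C' - wSum red M C

/-- The skip `S` is contained in the path `P` along `C`: the stretch of `C` removed by
the skip lies on `P`. -/
def Skip.In {V : Type*} [DecidableEq V] {G : SimpleGraph V} {red : Sym2 V → Bool}
    {M C : Finset (Sym2 V)} (S : Skip G red M C) (P : Finset (Sym2 V)) : Prop :=
  C \ S.C' ⊆ P

/-- Two skips on `C` are disjoint: they are contained in disjoint paths along `C`. -/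
def Skip.Disj {V : Type*} [DecidableEq V] {G : SimpleGraph V} {red : Sym2 V → Bool}
    {M C : Finset (Sym2 V)} (S1 S2 : Skip G red M C) : Prop :=
  ∃ P1 P2 : Finset (Sym2 V), P1 ⊆ C ∧ P2 ⊆ C ∧ Disjoint P1 P2 ∧
    IsAltPath G M P1 ∧ IsAltPath G M P2 ∧ S1.In P1 ∧ S2.In P2

/-- A skip living on one of the cycles of the family `𝒞`. -/
structure SkipOn {V : Type*} [DecidableEq V] (G : SimpleGraph V) (red : Sym2 V → Bool)
    (M : Finset (Sym2 V)) (𝒞 : Finset (Finset (Sym2 V))) where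
  C : Finset (Sym2 V)
  hC : C ∈ 𝒞
  S : Skip G red M C

/-- Two skips on cycles of `𝒞` are disjoint: either they live on different
(vertex-disjoint) cycles, or they are disjoint skips on the same cycle. -/
def SkipOn.Disj {V : Type*} [DecidableEq V] {G : SimpleGraph V} {red : Sym2 V → Bool}
    {M : Finset (Sym2 V)} {𝒞 : Finset (Finset (Sym2 V))}
    (T1 T2 : SkipOn G red M 𝒞) : Prop :=
  T1.C ≠ T2.C ∨ ∃ h : T1.C = T2.C, Skip.Disj (h ▸ T1.S) T2.S

/-- `𝒞` contains a 0-skip set: a nonempty collection of pairwise disjoint skips on cycles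
of `𝒞` of total weight 0. -/
def HasZeroSkipSet {V : Type*} [DecidableEq V] (G : SimpleGraph V) (red : Sym2 V → Bool)
    (M : Finset (Sym2 V)) (𝒞 : Finset (Finset (Sym2 V))) : Prop :=
  ∃ L : List (SkipOn G red M 𝒞), L ≠ [] ∧ L.Pairwise SkipOn.Disj ∧
    (L.map fun T => T.S.w).sum = 0

/-- `𝒞` contains a 0-skip-cycle set: a nonempty collection of pairwise disjoint skips on
cycles of `𝒞` and/or whole cycles `D ⊆ 𝒞` (the skips living on cycles not in `D`), such
that the total weight of the skips minus the total weight of the cycles is 0. -/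
def HasZeroSkipCycleSet {V : Type*} [DecidableEq V] (G : SimpleGraph V)
    (red : Sym2 V → Bool) (M : Finset (Sym2 V)) (𝒞 : Finset (Finset (Sym2 V))) : Prop :=
  ∃ (L : List (SkipOn G red M 𝒞)) (D : Finset (Finset (Sym2 V))),
    D ⊆ 𝒞 ∧ (L ≠ [] ∨ D.Nonempty) ∧ L.Pairwise SkipOn.Disj ∧ (∀ T ∈ L, T.C ∉ D) ∧
      (L.map fun T => T.S.w).sum - (∑ C ∈ D, wSum red M C) = 0

/-- The independence number `α(G)`: the maximum size of a set of pairwise non-adjacent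
vertices. -/
noncomputable def indepNum {V : Type*} (G : SimpleGraph V) : ℕ :=
  sSup {n | ∃ s : Finset V, s.card = n ∧ (s : Set V).Pairwise fun u v => ¬ G.Adj u v}

/-- `RamseyProp N s t`: every graph on `N` vertices contains a clique of size `s` or an
independent set of size `t`. -/
def RamseyProp (N s t : ℕ) : Prop :=
  ∀ H : SimpleGraph (Fin N),
    (∃ A : Finset (Fin N), A.card = s ∧ (A : Set (Fin N)).Pairwise H.Adj) ∨
    (∃ B : Finset (Fin N), B.card = t ∧ (B : Set (Fin N)).Pairwise fun u v => ¬ H.Adj u v)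

/-- The Ramsey number `R(s,t)`: the smallest `N` such that every graph on `N` vertices
contains a clique of size `s` or an independent set of size `t`. -/
noncomputable def ramsey (s t : ℕ) : ℕ := sInf {N | RamseyProp N s t}

/-- Edge number `k` of the closed vertex sequence `c`. -/
def ed {V : Type*} (c : ℕ → V) (k : ℕ) : Sym2 V := s(c k, c (k + 1))

/-- `c` lists the vertices of the alternating cycle `C` of length `2K`, starting with a matching edge. -/
structure CycRep {V : Type*} [DecidableEq V] (G : SimpleGraph V) (M C : Finset (Sym2 V))
    (K : ℕ) (c : ℕ → V) : Prop where
  hK : 2 ≤ K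
  inj : ∀ i j, i < 2 * K → j < 2 * K → c i = c j → i = j
  clos : c (2 * K) = c 0
  adj : ∀ k < 2 * K, G.Adj (c k) (c (k + 1))
  alt : ∀ k < 2 * K, (ed c k ∈ M ↔ Even k)
  eqC : C = (range (2 * K)).image (ed c)

theorem exists_walkOf {V : Type*} (G : SimpleGraph V) (c : ℕ → V) :
    ∀ n : ℕ, (∀ k < n, G.Adj (c k) (c (k + 1))) →
    ∃ p : G.Walk (c 0) (c n), p.support = (List.range (n + 1)).map c ∧
      p.edges = (List.range n).map (ed c) := by
  intro n
  induction n with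
  | zero => intro _; exact ⟨SimpleGraph.Walk.nil, by simp, by simp⟩
  | succ n ih =>
    intro h
    obtain ⟨p, h1, h2⟩ := ih (fun k hk => h k (by omega))
    refine ⟨p.concat (h n (by omega)), ?_, ?_⟩
    · rw [SimpleGraph.Walk.support_concat, h1, List.range_succ (n := n + 1)]; simp
    · rw [SimpleGraph.Walk.edges_concat, h2, List.range_succ (n := n)]; simp [ed]

theorem ed_inj {V : Type*} (c : ℕ → V) (n : ℕ) (hn : 3 ≤ n)
    (inj : ∀ i j, i < n → j < n → c i = c j → i = j) (clos : c n = c 0) :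
    ∀ i j, i < n → j < n → ed c i = ed c j → i = j := by
  intro i j hi hj h
  simp only [ed, Sym2.eq_iff] at h
  rcases h with ⟨h, -⟩ | ⟨h1, h2⟩
  · exact inj i j hi hj h
  · exfalso
    have key : ∀ i j, i < n → j < n → c i = c (j + 1) → i = j + 1 ∨ (j + 1 = n ∧ i = 0) := by
      intro i j hi hj h
      rcases Nat.lt_or_ge (j + 1) n with h' | h'
      · left; exact inj _ _ hi h' h
      · right
        have : j + 1 = n := by omega
        refine ⟨this, inj _ _ hi (by omega) ?_⟩
        rw [h, this, clos]
    have a1 := key i j hi hj h1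
    have a2 := key j i hj hi h2.symm
    omega

theorem CycRep.edinj {V : Type*} [DecidableEq V] {G : SimpleGraph V} {M C : Finset (Sym2 V)}
    {K : ℕ} {c : ℕ → V} (h : CycRep G M C K c) :
    ∀ i j, i < 2 * K → j < 2 * K → ed c i = ed c j → i = j :=
  ed_inj c (2 * K) (by have := h.hK; omega) h.inj h.clos

theorem CycRep.isAlt {V : Type*} [DecidableEq V] {G : SimpleGraph V} {M C : Finset (Sym2 V)}
    {K : ℕ} {c : ℕ → V} (h : CycRep G M C K c) : IsAltCycle G M C := by
  have hK := h.hK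
  obtain ⟨p, h1, h2⟩ := exists_walkOf G c (2 * K) h.adj
  let q : G.Walk (c 0) (c 0) := p.copy rfl h.clos
  have q1 : q.support = (List.range (2 * K + 1)).map c := by simp [q, h1]
  have q2 : q.edges = (List.range (2 * K)).map (ed c) := by simp [q, h2]
  refine ⟨c 0, q, ?_, ?_, ?_⟩
  · rw [SimpleGraph.Walk.isCycle_def]
    refine ⟨?_, ?_, ?_⟩
    · rw [SimpleGraph.Walk.isTrail_def, q2]
      refine List.Nodup.map_on ?_ List.nodup_range
      intro x hx y hy hxy
      exact h.edinj x y (List.mem_range.1 hx) (List.mem_range.1 hy) hxy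
    · intro hq
      have := congrArg (fun w => w.edges.length) hq
      simp [q2] at this
      omega
    · rw [q1, List.range_succ_eq_map]
      simp only [List.map_cons, List.tail_cons, List.map_map]
      refine List.Nodup.map_on ?_ List.nodup_range
      intro x hx y hy hxy
      rw [List.mem_range] at hx hy
      simp only [Function.comp, Nat.succ_eq_add_one] at hxy
      rcases Nat.lt_or_ge (x + 1) (2 * K) with hx' | hx' <;>
        rcases Nat.lt_or_ge (y + 1) (2 * K) with hy' | hy'
      · have := h.inj _ _ hx' hy' hxy; omega
      · have e : y + 1 = 2 * K := by omega
        rw [e, h.clos] at hxy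
        have := h.inj _ _ hx' (by omega) hxy; omega
      · have e : x + 1 = 2 * K := by omega
        rw [e, h.clos] at hxy
        have := h.inj _ _ (by omega) hy' hxy; omega
      · omega
  · rw [q2, h.eqC]
    ext e
    simp
  · rw [altList, q2]
    have e : (List.range (2 * K)).map (ed c) ++ ((List.range (2 * K)).map (ed c)).take 1 =
        (List.range (2 * K + 1)).map (ed fun k => if k < 2 * K + 1 then c k else c 1) := by
      rw [List.range_succ]
      have : (List.range (2 * K)) = 0 :: (List.range (2 * K - 1)).map Nat.succ := by
        rw [← List.range_succ_eq_map]; congr 1; omega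
      rw [List.map_append]
      congr 1
      · apply List.map_congr_left
        intro a ha
        rw [List.mem_range] at ha
        have : a < 2 * K + 1 := by omega
        simp [ed, ha, this]
      · rw [this]
        simp [ed, h.clos]
    rw [e]
    show List.IsChain _ _
    rw [List.isChain_iff_getElem]
    intro i hi
    simp only [List.length_map, List.length_range] at hi
    have hb : ∀ k < 2 * K, ed (fun k => if k < 2 * K + 1 then c k else c 1) k = ed c k := by
      intro k hk
      have : k < 2 * K + 1 := by omega
      simp [ed, hk, this]
    simp only [List.getElem_map, List.getElem_range]
    rw [hb i (by omega), h.alt i (by omega)]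
    rcases Nat.lt_or_ge (i + 1) (2 * K) with h' | h'
    · rw [hb _ h', h.alt _ h', Nat.even_add_one]
      tauto
    · have e : i + 1 = 2 * K := by omega
      have : ed (fun k => if k < 2 * K + 1 then c k else c 1) (i + 1) = ed c 0 := by
        simp [ed, e, h.clos]
      rw [this, h.alt 0 (by omega)]
      have : ¬ Even i := by
        rw [Nat.not_even_iff_odd]; exact ⟨K - 1, by omega⟩
      simp [this]

theorem exists_cycRep {V : Type*} [DecidableEq V] {G : SimpleGraph V} {M C : Finset (Sym2 V)}
    (h : IsAltCycle G M C) : ∃ K c, CycRep G M C K c := by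
  obtain ⟨v, p, hp, hC, halt⟩ := h
  have hlen := hp.three_le_length
  set n := p.length with hn
  -- cyclic edge function
  let d : ℕ → V := fun k => p.getVert (k % n)
  have hd0 : d n = d 0 := by simp [d]
  have hd1 : ∀ k ≤ n, d k = p.getVert k := by
    intro k hk
    rcases Nat.lt_or_ge k n with h' | h'
    · simp [d, Nat.mod_eq_of_lt h']
    · have : k = n := by omega
      subst this
      simp [d, hn]
  have hper : ∀ k, d (k + n) = d k := by intro k; simp [d]
  have hdinj : ∀ i j, i < n → j < n → d i = d j → i = j := by
    intro i j hi hj h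
    rw [hd1 i hi.le, hd1 j hj.le] at h
    exact hp.getVert_injOn' (by simp only [Set.mem_ofPred_eq]; omega)
      (by simp only [Set.mem_ofPred_eq]; omega) h
  have hedge : ∀ (k : ℕ) (hk : k < p.edges.length), p.edges[k] = ed d k := by
    intro k hk
    have hk' : k < n := by simpa using hk
    rw [SimpleGraph.Walk.getElem_edges_eq_edge_getElem_darts,
      SimpleGraph.Walk.darts_getElem_eq_getVert]
    simp [ed, hd1 k hk'.le, hd1 (k + 1) hk']
  have hadj : ∀ k < n, G.Adj (d k) (d (k + 1)) := by
    intro k hk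
    rw [hd1 k hk.le, hd1 (k + 1) hk]
    exact p.adj_getVert_succ hk
  have hedn : ed d n = ed d 0 := by
    have := hper 1
    simp [ed, hd0, add_comm n 1, this]
  have hch : ∀ k < n, ¬ ((ed d k ∈ M) ↔ (ed d (k + 1) ∈ M)) := by
    intro k hk
    have halt' : List.IsChain _ _ := halt
    rw [List.isChain_iff_getElem] at halt'
    have hl : (p.edges ++ p.edges.take 1).length = n + 1 := by
      simp; omega
    have := halt' k (by omega)
    have g1 : (p.edges ++ p.edges.take 1)[k]'(by omega) = ed d k := by
      rw [List.getElem_append_left (by simpa using hk), hedge]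
    have g2 : (p.edges ++ p.edges.take 1)[k+1]'(by omega) = ed d (k + 1) := by
      rcases Nat.lt_or_ge (k + 1) n with h' | h'
      · rw [List.getElem_append_left (by simpa using h'), hedge]
      · have e : k + 1 = n := by omega
        rw [List.getElem_append_right (by simp; omega)]
        rw [List.getElem_take, hedge]
        have : k + 1 - p.edges.length = 0 := by simp; omega
        rw [this, e, hedn]
    rwa [g1, g2] at this
  have hpar : ∀ k ≤ n, (ed d k ∈ M ↔ (ed d 0 ∈ M ↔ Even k)) := by
    intro k
    induction k with
    | zero => simp
    | succ k ih =>
      intro hk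
      have := ih (by omega)
      have := hch k (by omega)
      rw [Nat.even_add_one]
      tauto
  have hev : Even n := by
    have := hpar n le_rfl
    rw [hedn] at this
    tauto
  obtain ⟨K, hKn⟩ := hev
  have hn2 : n = 2 * K := by omega
  have hCd : C = (range n).image (ed d) := by
    rw [← hC]
    ext e
    simp only [List.mem_toFinset, Finset.mem_image, Finset.mem_range]
    rw [List.mem_iff_getElem]
    constructor
    · rintro ⟨i, hi, rfl⟩
      exact ⟨i, by simpa using hi, (hedge i hi).symm⟩
    · rintro ⟨i, hi, rfl⟩
      exact ⟨i, by simpa using hi, hedge i _⟩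
  by_cases h0 : ed d 0 ∈ M
  · refine ⟨K, d, ⟨by omega, ?_, ?_, ?_, ?_, ?_⟩⟩
    · rw [← hn2]; exact hdinj
    · rw [← hn2]; exact hd0
    · rw [← hn2]; exact hadj
    · rw [← hn2]; intro k hk
      have := hpar k hk.le
      tauto
    · rw [← hn2]; exact hCd
  · let c : ℕ → V := fun k => d (k + 1)
    have hed : ∀ k, ed c k = ed d (k + 1) := fun k => rfl
    refine ⟨K, c, ⟨by omega, ?_, ?_, ?_, ?_, ?_⟩⟩
    · rw [← hn2]; intro i j hi hj h
      simp only [c] at h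
      have hz : d n = d 0 := hd0
      rcases Nat.lt_or_ge (i + 1) n with hx' | hx' <;>
        rcases Nat.lt_or_ge (j + 1) n with hy' | hy'
      · have := hdinj _ _ hx' hy' h; omega
      · have e : j + 1 = n := by omega
        rw [e, hz] at h
        have := hdinj _ _ hx' (by omega) h; omega
      · have e : i + 1 = n := by omega
        rw [e, hz] at h
        have := hdinj _ _ (by omega) hy' h; omega
      · omega
    · rw [← hn2]
      have := hper 1
      simp only [c]
      rw [add_comm n 1, this]
    · rw [← hn2]; intro k hk
      simp only [c]
      rcases Nat.lt_or_ge (k + 1) n with h' | h'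
      · exact hadj _ h'
      · have e : k + 1 = n := by omega
        have h2 : d (k + 1 + 1) = d 1 := by rw [e, add_comm n 1]; exact hper 1
        rw [h2, e, hd0]
        exact hadj 0 (by omega)
    · rw [← hn2]; intro k hk
      rw [hed]
      have := hpar (k + 1) (by omega)
      rw [Nat.even_add_one] at this
      tauto
    · rw [← hn2, hCd]
      ext e
      simp only [Finset.mem_image, Finset.mem_range]
      constructor
      · rintro ⟨i, hi, rfl⟩
        rcases Nat.eq_zero_or_pos i with h' | h'
        · subst h'
          exact ⟨n - 1, by omega, by rw [hed, Nat.sub_add_cancel (by omega), hedn]⟩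
        · exact ⟨i - 1, by omega, by rw [hed, Nat.sub_add_cancel (by omega)]⟩
      · rintro ⟨i, hi, rfl⟩
        rcases Nat.lt_or_ge (i + 1) n with h' | h'
        · exact ⟨i + 1, h', rfl⟩
        · have e : i + 1 = n := by omega
          exact ⟨0, by omega, by rw [hed, e, hedn]⟩

theorem CycRep.path {V : Type*} [DecidableEq V] {G : SimpleGraph V} {M C : Finset (Sym2 V)}
    {K : ℕ} {c : ℕ → V} (h : CycRep G M C K c) (i j : ℕ) (hij : i ≤ j) (hj : j < 2 * K) :
    IsAltPath G M ((Ico i j).image (ed c)) := by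
  obtain ⟨p, h1, h2⟩ := exists_walkOf G (fun k => c (i + k)) (j - i)
    (fun k hk => h.adj (i + k) (by omega))
  refine ⟨_, _, p, ?_, ?_, ?_⟩
  · rw [SimpleGraph.Walk.isPath_def, h1]
    refine List.Nodup.map_on ?_ List.nodup_range
    intro x hx y hy hxy
    rw [List.mem_range] at hx hy
    have := h.inj _ _ (by omega) (by omega) hxy
    omega
  · rw [h2]
    ext e
    simp only [List.mem_toFinset, List.mem_map, List.mem_range, Finset.mem_image, Finset.mem_Ico]
    constructor
    · rintro ⟨a, ha, rfl⟩
      exact ⟨i + a, by omega, rfl⟩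
    · rintro ⟨a, ha, rfl⟩
      refine ⟨a - i, by omega, ?_⟩
      have e1 : i + (a - i) = a := by omega
      have e2 : i + (a - i + 1) = a + 1 := by omega
      simp only [ed, e1, e2]
  · rw [h2]
    show List.IsChain _ _
    rw [List.isChain_iff_getElem]
    intro k hk
    simp only [List.length_map, List.length_range] at hk
    simp only [List.getElem_map, List.getElem_range]
    have a1 := h.alt (i + k) (by omega)
    have a2 := h.alt (i + k + 1) (by omega)
    rw [Nat.even_add_one] at a2
    have b1 : ed (fun k => c (i + k)) k = ed c (i + k) := rfl
    have b2 : ed (fun k => c (i + k)) (k + 1) = ed c (i + k + 1) := rfl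
    rw [b1, b2]
    tauto

/-- The rerouted cycle. -/
def newc {V : Type*} (c : ℕ → V) (x y : ℕ) (k : ℕ) : V :=
  if k ≤ 2 * x + 1 then c k else if k < 2 * y then c (2 * x + 2 * y + 3 - k) else c (k + 4)

theorem newc_spec {V : Type*} (c : ℕ → V) (x y : ℕ) (hxy : x + 2 ≤ y) :
    (∀ k, k ≤ 2 * x → ed (newc c x y) k = ed c k) ∧
    (ed (newc c x y) (2 * x + 1) = s(c (2 * x + 1), c (2 * y + 1))) ∧
    (∀ k, 2 * x + 2 ≤ k → k + 2 ≤ 2 * y → ed (newc c x y) k = ed c (2 * x + 2 * y + 2 - k)) ∧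
    (ed (newc c x y) (2 * y - 1) = s(c (2 * x + 4), c (2 * y + 4))) ∧
    (∀ k, 2 * y ≤ k → ed (newc c x y) k = ed c (k + 4)) := by
  have n1 : ∀ k, k ≤ 2 * x + 1 → newc c x y k = c k := by
    intro k hk; simp [newc, hk]
  have n2 : ∀ k, 2 * x + 2 ≤ k → k < 2 * y → newc c x y k = c (2 * x + 2 * y + 3 - k) := by
    intro k hk hk'
    have : ¬ k ≤ 2 * x + 1 := by omega
    simp [newc, this, hk']
  have n3 : ∀ k, 2 * y ≤ k → newc c x y k = c (k + 4) := by
    intro k hk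
    have h1 : ¬ k ≤ 2 * x + 1 := by omega
    have h2 : ¬ k < 2 * y := by omega
    simp [newc, h1, h2]
  refine ⟨?_, ?_, ?_, ?_, ?_⟩
  · intro k hk
    simp only [ed]
    rw [n1 k (by omega), n1 (k + 1) (by omega)]
  · simp only [ed]
    rw [n1 _ (by omega), n2 _ (by omega) (by omega)]
    congr 3; omega
  · intro k hk hk'
    simp only [ed]
    rw [n2 _ (by omega) (by omega), n2 _ (by omega) (by omega), Sym2.eq_swap]
    have q1 : 2 * x + 2 * y + 3 - (k + 1) = 2 * x + 2 * y + 2 - k := by omega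
    have q2 : 2 * x + 2 * y + 3 - k = 2 * x + 2 * y + 2 - k + 1 := by omega
    rw [q1, q2]
  · simp only [ed]
    rw [n2 _ (by omega) (by omega), n3 _ (by omega)]
    congr 3 <;> omega
  · intro k hk
    simp only [ed]
    rw [n3 _ (by omega), n3 _ (by omega)]

/-- weight of the stretch at position `x`. -/
def sw {V : Type*} [DecidableEq V] (red : Sym2 V → Bool) (M : Finset (Sym2 V)) (c : ℕ → V)
    (x : ℕ) : ℤ :=
  wt red M (ed c (2 * x + 1)) + wt red M (ed c (2 * x + 2)) + wt red M (ed c (2 * x + 3))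

set_option maxHeartbeats 1000000 in
theorem exists_skip {V : Type*} [DecidableEq V] {G : SimpleGraph V} (red : Sym2 V → Bool)
    {M C : Finset (Sym2 V)} (hM : IsPM G M)
    {K : ℕ} {c : ℕ → V} (h : CycRep G M C K c) (x y : ℕ) (hxy : x + 2 ≤ y) (hy : y + 2 < K)
    (hb : G.Adj (c (2 * x + 1)) (c (2 * y + 1))) (ha : G.Adj (c (2 * x + 4)) (c (2 * y + 4))) :
    ∃ S : Skip G red M C, C \ S.C' ⊆ (Ico (2 * x + 1) (2 * y + 4)).image (ed c) ∧
      - sw red M c x - sw red M c y ≤ S.w ∧ S.w ≤ 2 - sw red M c x - sw red M c y := by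
  obtain ⟨s1, s2, s3, s4, s5⟩ := newc_spec c x y hxy
  have hne : ∀ i j, i < 2 * K → j < 2 * K → i ≠ j → c i ≠ c j :=
    fun i j hi hj hij hc => hij (h.inj i j hi hj hc)
  set e1 : Sym2 V := s(c (2 * x + 1), c (2 * y + 1)) with he1
  set e2 : Sym2 V := s(c (2 * x + 4), c (2 * y + 4)) with he2
  set c' := newc c x y with hc'
  -- chords are not matching edges nor cycle edges
  have huniq : ∀ e f : Sym2 V, ∀ v : V, e ∈ M → f ∈ M → v ∈ e → v ∈ f → e = f := by
    intro e f v h1 h2 h3 h4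
    exact (hM.2 v).unique ⟨h1, h3⟩ ⟨h2, h4⟩
  have he12 : e1 ≠ e2 := by
    intro he
    simp only [he1, he2, Sym2.eq_iff] at he
    rcases he with ⟨a, -⟩ | ⟨a, -⟩
    · exact hne _ _ (by omega) (by omega) (by omega) a
    · exact hne _ _ (by omega) (by omega) (by omega) a
  have he1M : e1 ∉ M := by
    intro hm
    have hm' : ed c (2 * x) ∈ M := (h.alt _ (by omega)).2 (by simp)
    have := huniq _ _ (c (2 * x + 1)) hm hm' (by simp [he1]) (by simp [ed])
    simp only [he1, ed, Sym2.eq_iff] at this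
    rcases this with ⟨a, -⟩ | ⟨-, a⟩
    · exact hne _ _ (by omega) (by omega) (by omega) a
    · exact hne _ _ (by omega) (by omega) (by omega) a
  have he2M : e2 ∉ M := by
    intro hm
    have hm' : ed c (2 * x + 4) ∈ M := (h.alt _ (by omega)).2 ⟨x + 2, by omega⟩
    have := huniq _ _ (c (2 * x + 4)) hm hm' (by simp [he2]) (by simp [ed])
    simp only [he2, ed, Sym2.eq_iff] at this
    rcases this with ⟨-, a⟩ | ⟨a, -⟩
    · exact hne _ _ (by omega) (by omega) (by omega) a
    · exact hne _ _ (by omega) (by omega) (by omega) a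
  have hchord : ∀ i j, i + 1 < 2 * K → j + 1 < 2 * K → i + 1 ≠ j → j + 1 ≠ i →
      s(c i, c j) ∉ C := by
    intro i j hi hj h1 h2 hm
    rw [h.eqC] at hm
    simp only [Finset.mem_image, Finset.mem_range, ed, Sym2.eq_iff] at hm
    obtain ⟨k, hk, ⟨a, b⟩ | ⟨a, b⟩⟩ := hm
    · have := h.inj _ _ hk (by omega) a
      subst this
      exact hne _ _ (by omega) (by omega) h1 b
    · have := h.inj _ _ hk (by omega) a
      subst this
      exact hne _ _ (by omega) (by omega) h2 b
  have he1C : e1 ∉ C := hchord _ _ (by omega) (by omega) (by omega) (by omega)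
  have he2C : e2 ∉ C := hchord _ _ (by omega) (by omega) (by omega) (by omega)
  set T : Finset ℕ :=
    {2 * x + 1, 2 * x + 2, 2 * x + 3, 2 * y + 1, 2 * y + 2, 2 * y + 3} with hT
  have hTsub : T ⊆ range (2 * K) := by
    intro k hk
    simp only [hT, Finset.mem_insert, Finset.mem_singleton] at hk
    rw [Finset.mem_range]; omega
  set D : Finset (Sym2 V) := (range (2 * K) \ T).image (ed c) with hD
  set C' : Finset (Sym2 V) := insert e1 (insert e2 D) with hC'
  have hDC : D ⊆ C := by
    rw [h.eqC]; exact Finset.image_subset_image Finset.sdiff_subset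
  have hC'eq : C' = (range (2 * (K - 2))).image (ed c') := by
    ext e
    simp only [hC', hD, Finset.mem_insert, Finset.mem_image, Finset.mem_sdiff, Finset.mem_range,
      hT, Finset.mem_singleton]
    constructor
    · rintro (rfl | rfl | ⟨k, ⟨hk, hk'⟩, rfl⟩)
      · exact ⟨2 * x + 1, by omega, s2⟩
      · exact ⟨2 * y - 1, by omega, s4⟩
      · rcases Nat.lt_or_ge k (2 * x + 1) with h1 | h1
        · exact ⟨k, by omega, s1 k (by omega)⟩
        · rcases Nat.lt_or_ge k (2 * y + 1) with h2 | h2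
          · refine ⟨2 * x + 2 * y + 2 - k, by omega, ?_⟩
            rw [s3 _ (by omega) (by omega)]
            congr 1; omega
          · refine ⟨k - 4, by omega, ?_⟩
            rw [s5 _ (by omega)]
            congr 1; omega
    · rintro ⟨k, hk, rfl⟩
      rcases Nat.lt_or_ge k (2 * x + 1) with h1 | h1
      · right; right
        exact ⟨k, by omega, (s1 k (by omega)).symm⟩
      rcases Nat.eq_or_lt_of_le h1 with h2 | h2
      · left; rw [← h2]; exact s2
      rcases Nat.lt_or_ge k (2 * y - 1) with h3 | h3
      · right; right
        exact ⟨_, by omega, (s3 k (by omega) (by omega)).symm⟩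
      rcases Nat.eq_or_lt_of_le h3 with h4 | h4
      · right; left; rw [← h4]; exact s4
      · right; right
        exact ⟨k + 4, by omega, (s5 k (by omega)).symm⟩
  have hrep : CycRep G M C' (K - 2) c' := by
    refine ⟨by omega, ?_, ?_, ?_, ?_, hC'eq⟩
    · intro i j hi hj hij
      simp only [hc', newc] at hij
      split_ifs at hij <;> have := h.inj _ _ (by omega) (by omega) hij <;> omega
    · have h1 : ¬ 2 * (K - 2) ≤ 2 * x + 1 := by omega
      have h2 : ¬ 2 * (K - 2) < 2 * y := by omega
      have h3 : 2 * (K - 2) + 4 = 2 * K := by omega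
      simp [hc', newc, h1, h2, h3, h.clos]
    · intro k hk
      rw [← SimpleGraph.mem_edgeSet]
      change ed c' k ∈ _
      have hE : ∀ k < 2 * K, ed c k ∈ G.edgeSet := fun k hk => h.adj k hk
      rcases Nat.lt_or_ge k (2 * x + 1) with h1 | h1
      · rw [s1 k (by omega)]; exact hE _ (by omega)
      rcases Nat.eq_or_lt_of_le h1 with h2 | h2
      · rw [← h2, s2]; exact hb
      rcases Nat.lt_or_ge k (2 * y - 1) with h3 | h3
      · rw [s3 k (by omega) (by omega)]; exact hE _ (by omega)
      rcases Nat.eq_or_lt_of_le h3 with h4 | h4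
      · rw [← h4, s4]; exact ha
      · rw [s5 k (by omega)]; exact hE _ (by omega)
    · intro k hk
      rcases Nat.lt_or_ge k (2 * x + 1) with h1 | h1
      · rw [s1 k (by omega)]; exact h.alt _ (by omega)
      rcases Nat.eq_or_lt_of_le h1 with h2 | h2
      · rw [← h2, s2]
        have : ¬ Even (2 * x + 1) := by rw [Nat.even_iff]; omega
        tauto
      rcases Nat.lt_or_ge k (2 * y - 1) with h3 | h3
      · rw [s3 k (by omega) (by omega), h.alt _ (by omega), Nat.even_iff, Nat.even_iff]
        omega
      rcases Nat.eq_or_lt_of_le h3 with h4 | h4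
      · rw [← h4, s4]
        have : ¬ Even (2 * y - 1) := by rw [Nat.even_iff]; omega
        tauto
      · rw [s5 k (by omega), h.alt _ (by omega), Nat.even_iff, Nat.even_iff]
        omega
  have hinjOn : Set.InjOn (ed c) (range (2 * K) : Finset ℕ) := by
    intro i hi j hj hij
    exact h.edinj i j (by simpa using hi) (by simpa using hj) hij
  have he2D : e2 ∉ D := fun hm => he2C (hDC hm)
  have he1D : e1 ∉ insert e2 D := by
    rw [Finset.mem_insert]; rintro (h' | h')
    · exact he12 h'
    · exact he1C (hDC h')
  have hsumT : ∀ f : ℕ → ℤ, ∑ k ∈ T, f k = f (2 * x + 1) + f (2 * x + 2) + f (2 * x + 3) +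
      f (2 * y + 1) + f (2 * y + 2) + f (2 * y + 3) := by
    intro f
    rw [hT]
    repeat rw [Finset.sum_insert (by simp only [Finset.mem_insert, Finset.mem_singleton]; omega)]
    rw [Finset.sum_singleton]; ring
  have hwC' : wSum red M C' = wt red M e1 + wt red M e2 + wSum red M D := by
    simp only [wSum, hC']
    rw [Finset.sum_insert he1D, Finset.sum_insert he2D]; ring
  have hwD : wSum red M D = wSum red M C - sw red M c x - sw red M c y := by
    have a1 : wSum red M D = ∑ k ∈ range (2 * K) \ T, wt red M (ed c k) := by
      simp only [wSum, hD]
      refine Finset.sum_image ?_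
      intro i hi j hj hij
      exact hinjOn (Finset.sdiff_subset hi) (Finset.sdiff_subset hj) hij
    have a2 : wSum red M C = ∑ k ∈ range (2 * K), wt red M (ed c k) := by
      rw [h.eqC]
      exact Finset.sum_image hinjOn
    have a3 := Finset.sum_sdiff (f := fun k => wt red M (ed c k)) hTsub
    rw [hsumT] at a3
    rw [a1, a2, ← a3]
    simp only [sw]; ring
  have hwtb : ∀ e, e ∉ M → 0 ≤ wt red M e ∧ wt red M e ≤ 1 := by
    intro e he
    simp only [wt, he, if_false]; split_ifs <;> simp
  have hwtb' : ∀ e, e ∈ M → -1 ≤ wt red M e ∧ wt red M e ≤ 0 := by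
    intro e he
    simp only [wt, he, if_true]; split_ifs <;> simp
  have hswb : ∀ x, x + 2 < K → -1 ≤ sw red M c x ∧ sw red M c x ≤ 2 := by
    intro x hx
    have b1 := hwtb (ed c (2 * x + 1))
      (by rw [h.alt _ (by omega), Nat.even_iff]; omega)
    have b2 := hwtb' (ed c (2 * x + 2))
      (by rw [h.alt _ (by omega), Nat.even_iff]; omega)
    have b3 := hwtb (ed c (2 * x + 3))
      (by rw [h.alt _ (by omega), Nat.even_iff]; omega)
    simp only [sw]; omega
  have w1 := hwtb e1 he1M
  have w2 := hwtb e2 he2M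
  have w3 := hswb x (by omega)
  have w4 := hswb y (by omega)
  have hcardT : T.card = 6 := by
    have := hsumT (fun _ => 1)
    simp at this
    exact_mod_cast this
  have hcardC : C.card = 2 * K := by
    rw [h.eqC, Finset.card_image_of_injOn hinjOn, Finset.card_range]
  have hcardC' : C'.card ≤ 2 * (K - 2) := by
    rw [hC'eq]; exact Finset.card_image_le.trans (by simp)
  have hwf : wSum red M C' - wSum red M C =
      wt red M e1 + wt red M e2 - sw red M c x - sw red M c y := by rw [hwC', hwD]; ring
  have hwf4 : |wSum red M C' - wSum red M C| ≤ 4 := by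
    rw [hwf, abs_le]; constructor <;> linarith [w1.1, w1.2, w2.1, w2.2, w3.1, w3.2, w4.1, w4.2]
  have hlt : C'.card < C.card := by
    rw [hcardC]; refine lt_of_le_of_lt hcardC' ?_; omega
  refine ⟨⟨e1, e2, C', he12, hb, ha, he1M, he2M, he1C, he2C, hrep.isAlt, by simp [hC'],
    by simp [hC'], ?_, hlt, hwf4⟩, ?_, ?_, ?_⟩
  · intro e he
    simp only [hC', Finset.mem_sdiff, Finset.mem_insert, Finset.mem_singleton] at he
    obtain ⟨he | he | he, hn⟩ := he
    · exact absurd (Or.inl he) hn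
    · exact absurd (Or.inr he) hn
    · exact hDC he
  · intro e he
    obtain ⟨he, he'⟩ := Finset.mem_sdiff.1 he
    rw [h.eqC] at he
    rw [Finset.mem_image] at he ⊢
    obtain ⟨k, hk, rfl⟩ := he
    refine ⟨k, ?_, rfl⟩
    by_contra hk'
    apply he'
    simp only [hC', Finset.mem_insert]
    right; right
    rw [hD]
    refine Finset.mem_image_of_mem _ ?_
    rw [Finset.mem_sdiff]
    refine ⟨hk, ?_⟩
    simp only [hT, Finset.mem_insert, Finset.mem_singleton]
    rw [Finset.mem_Ico] at hk'
    omega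
  · simp only [Skip.w]; rw [hwf]; linarith [w1.1, w1.2, w2.1, w2.2]
  · simp only [Skip.w]; rw [hwf]; linarith [w1.1, w1.2, w2.1, w2.2]

theorem skipOn_disj {V : Type*} [DecidableEq V] {G : SimpleGraph V} {red : Sym2 V → Bool}
    {M C : Finset (Sym2 V)} {𝒞 : Finset (Finset (Sym2 V))}
    {K : ℕ} {c : ℕ → V} (h : CycRep G M C K c) (T1 T2 : SkipOn G red M 𝒞)
    (h1 : T1.C = C) (h2 : T2.C = C) (x1 y1 x2 y2 : ℕ)
    (b1 : x1 ≤ y1) (b1' : y1 + 2 < K) (b2 : x2 ≤ y2) (b2' : y2 + 2 < K)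
    (l1 : C \ T1.S.C' ⊆ (Ico (2 * x1 + 1) (2 * y1 + 4)).image (ed c))
    (l2 : C \ T2.S.C' ⊆ (Ico (2 * x2 + 1) (2 * y2 + 4)).image (ed c))
    (hd : y1 + 2 ≤ x2 ∨ y2 + 2 ≤ x1) : T1.Disj T2 := by
  obtain ⟨C1, hC1, S1⟩ := T1
  obtain ⟨C2, hC2, S2⟩ := T2
  simp only at h1 h2 l1 l2
  subst h1
  subst h2
  right
  refine ⟨rfl, _, _, ?_, ?_, ?_, h.path (2 * x1 + 1) (2 * y1 + 4) (by omega) (by omega),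
    h.path (2 * x2 + 1) (2 * y2 + 4) (by omega) (by omega), l1, l2⟩
  · have := h.eqC
    simp only at this ⊢
    rw [this]
    refine Finset.image_subset_image ?_
    intro k hk
    rw [Finset.mem_Ico] at hk; rw [Finset.mem_range]; omega
  · have := h.eqC
    simp only at this ⊢
    rw [this]
    refine Finset.image_subset_image ?_
    intro k hk
    rw [Finset.mem_Ico] at hk; rw [Finset.mem_range]; omega
  · rw [Finset.disjoint_left]
    intro e he he'
    rw [Finset.mem_image] at he he'
    obtain ⟨k, hk, rfl⟩ := he
    obtain ⟨k', hk', hkk⟩ := he'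
    rw [Finset.mem_Ico] at hk hk'
    have := h.edinj _ _ (by omega) (by omega) hkk
    omega

theorem ramsey_aux {ι : Type*} [DecidableEq ι] (r : ι → ι → Prop) (hr : ∀ x y, r x y → r y x) :
    ∀ n p q : ℕ, p + q = n → ∀ S : Finset ι, 2 ^ n ≤ S.card →
    (∃ T ⊆ S, T.card = p + 1 ∧ (T : Set ι).Pairwise r) ∨
    (∃ T ⊆ S, T.card = q + 1 ∧ (T : Set ι).Pairwise fun x y => ¬ r x y) := by
  classical
  intro n
  induction n with
  | zero =>
    intro p q hpq S hS
    have hne : S.Nonempty := by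
      rw [← Finset.card_pos]; rw [pow_zero] at hS; omega
    obtain ⟨v, hv⟩ := hne
    left
    have hp0 : p = 0 := by omega
    exact ⟨{v}, by simpa using hv, by simp [hp0], by simp⟩
  | succ n ih =>
    intro p q hpq S hS
    have hne : S.Nonempty := by
      rw [← Finset.card_pos]; exact lt_of_lt_of_le (by positivity) hS
    obtain ⟨v, hv⟩ := hne
    rcases Nat.eq_zero_or_pos p with hp | hp
    · left
      exact ⟨{v}, by simpa using hv, by simp [hp], by simp⟩
    rcases Nat.eq_zero_or_pos q with hq | hq
    · right
      exact ⟨{v}, by simpa using hv, by simp [hq], by simp⟩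
    set A := (S.erase v).filter (fun x => r v x) with hA
    set B := (S.erase v).filter (fun x => ¬ r v x) with hB
    have hAB : A.card + B.card = S.card - 1 := by
      rw [hA, hB, Finset.card_filter_add_card_filter_not, Finset.card_erase_of_mem hv]
    have hAS : A ⊆ S := (Finset.filter_subset _ _).trans (Finset.erase_subset _ _)
    have hBS : B ⊆ S := (Finset.filter_subset _ _).trans (Finset.erase_subset _ _)
    have hvA : v ∉ A := by simp [hA]
    have hvB : v ∉ B := by simp [hB]
    have h2 : 2 ^ (n + 1) = 2 * 2 ^ n := by ring
    rcases Nat.lt_or_ge A.card (2 ^ n) with h | h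
    · have hBc : 2 ^ n ≤ B.card := by omega
      rcases ih p (q - 1) (by omega) B hBc with ⟨T, hT, hc, hT'⟩ | ⟨T, hT, hc, hT'⟩
      · left; exact ⟨T, hT.trans hBS, hc, hT'⟩
      · right
        refine ⟨insert v T, Finset.insert_subset hv (hT.trans hBS), ?_, ?_⟩
        · rw [Finset.card_insert_of_notMem (fun h => hvB (hT h))]; omega
        · rw [Finset.coe_insert]
          refine hT'.insert ?_
          intro b hb _
          have : b ∈ B := hT hb
          have h3 : ¬ r v b := (Finset.mem_filter.1 this).2
          exact ⟨h3, fun h4 => h3 (hr _ _ h4)⟩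
    · rcases ih (p - 1) q (by omega) A h with ⟨T, hT, hc, hT'⟩ | ⟨T, hT, hc, hT'⟩
      · left
        refine ⟨insert v T, Finset.insert_subset hv (hT.trans hAS), ?_, ?_⟩
        · rw [Finset.card_insert_of_notMem (fun h => hvA (hT h))]; omega
        · rw [Finset.coe_insert]
          refine hT'.insert ?_
          intro b hb _
          have : b ∈ A := hT hb
          have h3 : r v b := (Finset.mem_filter.1 this).2
          exact ⟨h3, hr _ _ h3⟩
      · right; exact ⟨T, hT.trans hAS, hc, hT'⟩

theorem indep_le {V : Type*} [Fintype V] (G : SimpleGraph V) (s : Finset V)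
    (hs : (s : Set V).Pairwise fun u v => ¬ G.Adj u v) : s.card ≤ indepNum G := by
  refine le_csSup ?_ ⟨s, rfl, hs⟩
  refine ⟨Fintype.card V, ?_⟩
  rintro n ⟨s, rfl, -⟩
  exact Finset.card_le_univ s

theorem ramsey_pair {V : Type*} [Fintype V] [DecidableEq V] (G : SimpleGraph V) (a b : ℕ → V)
    (S : Finset ℕ) (hS : 4 ^ indepNum G ≤ S.card)
    (ha : Set.InjOn a S) (hb : Set.InjOn b S) :
    ∃ x ∈ S, ∃ y ∈ S, x < y ∧ G.Adj (b x) (b y) ∧ G.Adj (a x) (a y) := by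
  by_contra hcon
  push Not at hcon
  have hsym : ∀ x ∈ S, ∀ y ∈ S, x ≠ y → G.Adj (b x) (b y) → ¬ G.Adj (a x) (a y) := by
    intro x hx y hy hxy hadj hadj'
    rcases lt_or_gt_of_ne hxy with h | h
    · exact hcon x hx y hy h hadj hadj'
    · exact hcon y hy x hx h hadj.symm hadj'.symm
  have key : ∀ (f : ℕ → V) (T : Finset ℕ), T ⊆ S → Set.InjOn f S → T.card = indepNum G + 1 →
      (∀ x ∈ T, ∀ y ∈ T, x ≠ y → ¬ G.Adj (f x) (f y)) → False := by
    intro f T hT hf hc hp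
    have h1 : (T.image f).card = T.card := Finset.card_image_of_injOn (hf.mono (by exact_mod_cast hT))
    have h2 := indep_le G (T.image f) (by
      intro u hu v hv huv
      rw [Finset.mem_coe, Finset.mem_image] at hu hv
      obtain ⟨x, hx, rfl⟩ := hu
      obtain ⟨y, hy, rfl⟩ := hv
      exact hp x hx y hy (fun h => huv (by rw [h])))
    omega
  rcases ramsey_aux (fun x y => ¬ G.Adj (b x) (b y)) (fun x y h h' => h h'.symm) _
    (indepNum G) (indepNum G) rfl S (by
      rw [← two_mul, pow_mul]; exact hS) with ⟨T, hT, hc, hp⟩ | ⟨T, hT, hc, hp⟩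
  · exact key b T hT hb hc (fun x hx y hy hxy => hp hx hy hxy)
  · refine key a T hT ha hc (fun x hx y hy hxy => hsym x (hT hx) y (hT hy) hxy ?_)
    have := hp hx hy hxy
    exact not_not.1 this

theorem cut_aux (B : Finset ℕ) (r : ℕ) (hr : r ≤ B.card) :
    ∃ c, (B.filter (fun k => k < c)).card = r := by
  induction r with
  | zero => exact ⟨0, by simp⟩
  | succ r ih =>
    obtain ⟨c, hc⟩ := ih (by omega)
    have hne : (B.filter (fun k => ¬ k < c)).Nonempty := by
      rw [← Finset.card_pos]
      have := Finset.card_filter_add_card_filter_not (s := B) (fun k => k < c)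
      omega
    set m := (B.filter (fun k => ¬ k < c)).min' hne with hm
    have hmem := Finset.min'_mem _ hne
    rw [← hm, Finset.mem_filter] at hmem
    refine ⟨m + 1, ?_⟩
    have : B.filter (fun k => k < m + 1) = insert m (B.filter (fun k => k < c)) := by
      ext k
      simp only [Finset.mem_filter, Finset.mem_insert]
      constructor
      · rintro ⟨h1, h2⟩
        by_cases h3 : k < c
        · right; exact ⟨h1, h3⟩
        · left
          have := Finset.min'_le (B.filter (fun k => ¬ k < c)) k (by simp [h1]; omega)
          omega
      · rintro (rfl | ⟨h1, h2⟩)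
        · exact ⟨hmem.1, by omega⟩
        · exact ⟨h1, by omega⟩
    rw [this, Finset.card_insert_of_notMem (by simp; omega), hc]

theorem groups_aux (R : ℕ) (Q : ℕ → ℕ → Prop) (m : ℕ) : ∀ B : Finset ℕ,
    (∀ S ⊆ B, R ≤ S.card → ∃ x ∈ S, ∃ y ∈ S, x < y ∧ Q x y) →
    (∀ x ∈ B, ∀ y ∈ B, x < y → x + 2 ≤ y) → m * R ≤ B.card →
    ∃ L : List (ℕ × ℕ), L.length = m ∧
      (∀ z ∈ L, z.1 ∈ B ∧ z.2 ∈ B ∧ z.1 + 2 ≤ z.2 ∧ Q z.1 z.2) ∧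
      L.Pairwise fun z z' => z.2 + 2 ≤ z'.1 := by
  induction m with
  | zero => intro B _ _ _; exact ⟨[], by simp⟩
  | succ m ih =>
    intro B h1 h2 h3
    rw [Nat.succ_mul] at h3
    obtain ⟨c, hc⟩ := cut_aux B R (by omega)
    have hs := Finset.card_filter_add_card_filter_not (s := B) (fun k => k < c)
    have hsub : B.filter (fun k => ¬ k < c) ⊆ B := Finset.filter_subset _ _
    obtain ⟨x, hx, y, hy, hxy, hQ⟩ := h1 _ (Finset.filter_subset (fun k => k < c) B) hc.ge
    obtain ⟨L, hL, hL1, hL2⟩ := ih (B.filter (fun k => ¬ k < c))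
      (fun S hS => h1 S (hS.trans hsub)) (fun x hx y hy => h2 x (hsub hx) y (hsub hy)) (by omega)
    rw [Finset.mem_filter] at hx hy
    refine ⟨(x, y) :: L, by simp [hL], ?_, ?_⟩
    · intro z hz
      rw [List.mem_cons] at hz
      rcases hz with rfl | hz
      · exact ⟨hx.1, hy.1, h2 _ hx.1 _ hy.1 hxy, hQ⟩
      · obtain ⟨a1, a2, a3⟩ := hL1 z hz
        exact ⟨hsub a1, hsub a2, a3⟩
    · rw [List.pairwise_cons]
      refine ⟨?_, hL2⟩
      intro z hz
      have := (hL1 z hz).1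
      rw [Finset.mem_filter] at this
      exact h2 _ hy.1 _ this.1 (by omega)

theorem parity_aux (A : Finset ℕ) (n : ℕ) (hA : 2 * n ≤ A.card) :
    ∃ B ⊆ A, n ≤ B.card ∧ ∀ x ∈ B, ∀ y ∈ B, x < y → x + 2 ≤ y := by
  have hs := Finset.card_filter_add_card_filter_not (s := A) (fun k => k % 2 = 0)
  rcases Nat.lt_or_ge (A.filter (fun k => k % 2 = 0)).card n with h | h
  · refine ⟨A.filter (fun k => ¬ k % 2 = 0), Finset.filter_subset _ _, by omega, ?_⟩
    intro x hx y hy hxy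
    rw [Finset.mem_filter] at hx hy
    omega
  · refine ⟨A.filter (fun k => k % 2 = 0), Finset.filter_subset _ _, by omega, ?_⟩
    intro x hx y hy hxy
    rw [Finset.mem_filter] at hx hy
    omega

/-- The skip `T` lives on `C` at positions inside `A`, with its weight controlled. -/
def Loc {V : Type*} [DecidableEq V] {G : SimpleGraph V} {red : Sym2 V → Bool}
    {M : Finset (Sym2 V)} {𝒞 : Finset (Finset (Sym2 V))} (C : Finset (Sym2 V)) (c : ℕ → V)
    (A : Finset ℕ) (T : SkipOn G red M 𝒞) (x y : ℕ) : Prop :=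
  T.C = C ∧ x ∈ A ∧ y ∈ A ∧ x + 2 ≤ y ∧
    C \ T.S.C' ⊆ (Ico (2 * x + 1) (2 * y + 4)).image (ed c) ∧
    - sw red M c x - sw red M c y ≤ T.S.w ∧ T.S.w ≤ 2 - sw red M c x - sw red M c y

theorem extract {V : Type*} [Fintype V] [DecidableEq V] {G : SimpleGraph V}
    {red : Sym2 V → Bool} {M C : Finset (Sym2 V)} (hM : IsPM G M)
    {𝒞 : Finset (Finset (Sym2 V))} (hC : C ∈ 𝒞)
    {K : ℕ} {c : ℕ → V} (h : CycRep G M C K c) (A : Finset ℕ) (hA : ∀ x ∈ A, x + 2 < K)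
    (m : ℕ) (hm : 2 * (m * 4 ^ indepNum G) ≤ A.card) :
    ∃ L : List (SkipOn G red M 𝒞), L.length = m ∧ (∀ T ∈ L, ∃ x y, Loc C c A T x y) ∧
      L.Pairwise SkipOn.Disj := by
  classical
  obtain ⟨B, hBA, hBc, hBs⟩ := parity_aux A _ hm
  obtain ⟨L, hL, hL1, hL2⟩ := groups_aux (4 ^ indepNum G)
    (fun x y => G.Adj (c (2 * x + 1)) (c (2 * y + 1)) ∧ G.Adj (c (2 * x + 4)) (c (2 * y + 4)))
    m B (by
      intro S hS hSc
      refine ramsey_pair G (fun x => c (2 * x + 4)) (fun x => c (2 * x + 1)) S hSc ?_ ?_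
      · intro x hx y hy hxy
        have h1 := hA x (hBA (hS hx))
        have h2 := hA y (hBA (hS hy))
        have := h.inj _ _ (by omega) (by omega) hxy
        omega
      · intro x hx y hy hxy
        have h1 := hA x (hBA (hS hx))
        have h2 := hA y (hBA (hS hy))
        have := h.inj _ _ (by omega) (by omega) hxy
        omega) hBs hBc
  have hex : ∀ z : ℕ × ℕ, ∃ T : Option (SkipOn G red M 𝒞), z ∈ L →
      ∃ T', T = some T' ∧ Loc C c A T' z.1 z.2 := by
    intro z
    by_cases hz : z ∈ L
    · obtain ⟨a1, a2, a3, a4, a5⟩ := hL1 z hz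
      obtain ⟨S, hS⟩ := exists_skip red hM h z.1 z.2 a3 (hA _ (hBA a2)) a4 a5
      exact ⟨some ⟨C, hC, S⟩, fun _ => ⟨_, rfl, rfl, hBA a1, hBA a2, a3, hS⟩⟩
    · exact ⟨none, fun h => absurd h hz⟩
  choose F hF using hex
  choose F' hF' hF'' using hF
  have hdj : ∀ T1 T2 : SkipOn G red M 𝒞, ∀ x1 y1 x2 y2, Loc C c A T1 x1 y1 →
      Loc C c A T2 x2 y2 → y1 + 2 ≤ x2 → T1.Disj T2 := by
    intro T1 T2 x1 y1 x2 y2 l1 l2 hl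
    obtain ⟨p1, p2, p3, p4, p5, -⟩ := l1
    obtain ⟨q1, q2, q3, q4, q5, -⟩ := l2
    exact skipOn_disj h T1 T2 p1 q1 x1 y1 x2 y2 (by omega) (hA _ p3) (by omega) (hA _ q3)
      p5 q5 (Or.inl hl)
  refine ⟨L.attach.map (fun z => F' z.1 z.2), by simp [hL], ?_, ?_⟩
  · intro T hT
    rw [List.mem_map] at hT
    obtain ⟨z, -, rfl⟩ := hT
    exact ⟨_, _, hF'' z.1 z.2⟩
  · rw [List.pairwise_map]
    have : L.attach.Pairwise fun z z' => z.1.2 + 2 ≤ z'.1.1 := by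
      rw [← List.pairwise_map (f := Subtype.val) (R := fun z z' : ℕ × ℕ => z.2 + 2 ≤ z'.1)]
      rw [List.attach_map_subtype_val]; exact hL2
    refine this.imp ?_
    intro z z' hzz
    exact hdj _ _ _ _ _ _ (hF'' z.1 z.2) (hF'' z'.1 z'.2) hzz

theorem pigeon_aux {τ : Type*} (w : τ → ℤ) (L : List τ) (hL : 13 ≤ L.length)
    (hw : ∀ T ∈ L, 1 ≤ w T ∧ w T ≤ 4) :
    ∃ (p : ℕ) (L' : List τ), 1 ≤ p ∧ p ≤ 4 ∧ L'.Sublist L ∧ 4 ≤ L'.length ∧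
      ∀ T ∈ L', w T = p := by
  have key : L.length = (L.filter (fun T => w T = 1)).length + (L.filter (fun T => w T = 2)).length
      + (L.filter (fun T => w T = 3)).length + (L.filter (fun T => w T = 4)).length := by
    clear hL
    induction L with
    | nil => simp
    | cons a l ih =>
      have h1 := hw a (by simp)
      have h2 := ih (fun T hT => hw T (by simp [hT]))
      have h3 : w a = 1 ∨ w a = 2 ∨ w a = 3 ∨ w a = 4 := by omega
      rcases h3 with h3 | h3 | h3 | h3 <;> simp [h3] <;> omega
  have fin : ∀ p : ℕ, 1 ≤ p → p ≤ 4 → 4 ≤ (L.filter (fun T => w T = p)).length →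
      ∃ (p : ℕ) (L' : List τ), 1 ≤ p ∧ p ≤ 4 ∧ L'.Sublist L ∧ 4 ≤ L'.length ∧
      ∀ T ∈ L', w T = p := by
    intro p h1 h2 h3
    refine ⟨p, _, h1, h2, List.filter_sublist, h3, ?_⟩
    intro T hT
    simpa using (List.mem_filter.1 hT).2
  by_contra hcon
  have f1 := mt (fin 1 (by omega) (by omega)) hcon
  have f2 := mt (fin 2 (by omega) (by omega)) hcon
  have f3 := mt (fin 3 (by omega) (by omega)) hcon
  have f4 := mt (fin 4 (by omega) (by omega)) hcon
  push_cast at f1 f2 f3 f4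
  omega

theorem zero_of_lists {V : Type*} [DecidableEq V] {G : SimpleGraph V}
    {red : Sym2 V → Bool} {M : Finset (Sym2 V)} {𝒞 : Finset (Finset (Sym2 V))}
    (L1 L2 : List (SkipOn G red M 𝒞)) (n1 : 13 ≤ L1.length) (n2 : 13 ≤ L2.length)
    (w1 : ∀ T ∈ L1, T.S.w ≤ 0) (w2 : ∀ T ∈ L2, 0 ≤ T.S.w)
    (hd : (L1 ++ L2).Pairwise SkipOn.Disj) : HasZeroSkipSet G red M 𝒞 := by
  by_cases h0 : ∃ T : SkipOn G red M 𝒞, T.S.w = 0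
  · obtain ⟨T, hT⟩ := h0
    exact ⟨[T], by simp, by simp, by simp [hT]⟩
  have h0' : ∀ T : SkipOn G red M 𝒞, T.S.w ≠ 0 := fun T hT => h0 ⟨T, hT⟩
  have hb : ∀ T : SkipOn G red M 𝒞, -4 ≤ T.S.w ∧ T.S.w ≤ 4 := fun T => abs_le.1 T.S.hwbound
  obtain ⟨p, L1', p1, p4, s1, c1, e1⟩ := pigeon_aux (fun T : SkipOn G red M 𝒞 => - T.S.w) L1 n1 (by
    intro T hT
    have a1 := w1 T hT
    have a2 := h0' T
    have a3 := hb T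
    omega)
  obtain ⟨q, L2', q1, q4, s2, c2, e2⟩ := pigeon_aux (fun T : SkipOn G red M 𝒞 => T.S.w) L2 n2 (by
    intro T hT
    have a1 := w2 T hT
    have a2 := h0' T
    have a3 := hb T
    omega)
  have hsum : ∀ (l : List (SkipOn G red M 𝒞)) (z : ℤ), (∀ T ∈ l, T.S.w = z) →
      (l.map fun T => T.S.w).sum = l.length * z := by
    intro l z hl
    rw [List.map_congr_left hl]
    simp
  refine ⟨L1'.take q ++ L2'.take p, ?_, ?_, ?_⟩
  · intro h
    have := congrArg List.length h
    rw [List.length_append, List.length_take, List.length_take, List.length_nil] at this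
    omega
  · refine hd.sublist (List.Sublist.append ?_ ?_)
    · exact (List.take_sublist _ _).trans s1
    · exact (List.take_sublist _ _).trans s2
  · rw [List.map_append, List.sum_append, hsum _ (-p : ℤ), hsum _ (q : ℤ)]
    · rw [List.length_take, List.length_take, min_eq_left (by omega), min_eq_left (by omega)]
      ring
    · intro T hT
      exact e2 T (List.mem_of_mem_take hT)
    · intro T hT
      have := e1 T (List.mem_of_mem_take hT)
      omega

theorem sum_two_mul (f : ℕ → ℤ) (K : ℕ) :
    ∑ k ∈ range (2 * K), f k = ∑ x ∈ range K, f (2 * x) + ∑ x ∈ range K, f (2 * x + 1) := by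
  induction K with
  | zero => simp
  | succ K ih =>
    rw [show 2 * (K + 1) = 2 * K + 1 + 1 by ring, Finset.sum_range_succ, Finset.sum_range_succ, ih,
      Finset.sum_range_succ, Finset.sum_range_succ]
    ring

theorem count_aux (ρ : ℕ → ℤ) (h0 : ∀ k, 0 ≤ ρ k) (h1 : ∀ k, ρ k ≤ 1) (s : ℕ → ℤ)
    (k : ℕ) (hs : ∀ x < k, s x = ρ (2 * x + 1) - ρ (2 * x + 2) + ρ (2 * x + 3)) (E O : ℤ)
    (hE : E = ∑ x ∈ range (k + 2), ρ (2 * x)) (hO : O = ∑ x ∈ range (k + 2), ρ (2 * x + 1)) :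
    4 * O - 2 * E - 8 ≤ 4 * (((range k).filter (fun x => 1 ≤ s x)).card : ℤ) ∧
    2 * ((k : ℤ) + 2) - 4 * O + 2 * E - 8 ≤
      4 * (((range k).filter (fun x => ¬ 1 ≤ s x)).card : ℤ) := by
  have hsum : ∑ x ∈ range k, s x = ∑ x ∈ range k, ρ (2 * x + 1) - ∑ x ∈ range k, ρ (2 * x + 2)
      + ∑ x ∈ range k, ρ (2 * x + 3) := by
    rw [← Finset.sum_sub_distrib, ← Finset.sum_add_distrib]
    exact Finset.sum_congr rfl (fun x hx => hs x (Finset.mem_range.1 hx))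
  have o1 : O = ∑ x ∈ range k, ρ (2 * x + 1) + ρ (2 * k + 1) + ρ (2 * (k + 1) + 1) := by
    rw [hO, Finset.sum_range_succ, Finset.sum_range_succ]
  have o2 : O = ∑ x ∈ range k, ρ (2 * x + 3) + ρ 1 + ρ (2 * (k + 1) + 1) := by
    rw [hO, Finset.sum_range_succ, Finset.sum_range_succ']
    simp [mul_add]
  have o3 : E = ∑ x ∈ range k, ρ (2 * x + 2) + ρ 0 + ρ (2 * (k + 1)) := by
    rw [hE, Finset.sum_range_succ, Finset.sum_range_succ']
    simp [mul_add]
  have u1 : ∑ x ∈ range k, s x ≤ 2 * (((range k).filter (fun x => 1 ≤ s x)).card : ℤ) := by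
    rw [Finset.card_filter, Nat.cast_sum, Finset.mul_sum]
    refine Finset.sum_le_sum (fun x hx => ?_)
    have := hs x (Finset.mem_range.1 hx)
    have a1 := h1 (2 * x + 1)
    have a2 := h0 (2 * x + 2)
    have a3 := h1 (2 * x + 3)
    split_ifs <;> push_cast <;> omega
  have u2 : (k : ℤ) - ∑ x ∈ range k, s x ≤
      2 * (((range k).filter (fun x => ¬ 1 ≤ s x)).card : ℤ) := by
    have : (k : ℤ) - ∑ x ∈ range k, s x = ∑ x ∈ range k, (1 - s x) := by
      rw [Finset.sum_sub_distrib]; simp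
    rw [this, Finset.card_filter, Nat.cast_sum, Finset.mul_sum]
    refine Finset.sum_le_sum (fun x hx => ?_)
    have := hs x (Finset.mem_range.1 hx)
    have a1 := h0 (2 * x + 1)
    have a2 := h1 (2 * x + 2)
    have a3 := h0 (2 * x + 3)
    split_ifs <;> push_cast <;> omega
  have b1 := h0 (2 * k + 1)
  have b2 := h1 (2 * k + 1)
  have b3 := h0 (2 * (k + 1) + 1)
  have b4 := h1 (2 * (k + 1) + 1)
  have b5 := h0 1
  have b6 := h1 1
  have b7 := h0 0
  have b8 := h1 0
  have b9 := h0 (2 * (k + 1))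
  have b10 := h1 (2 * (k + 1))
  constructor <;> linarith

theorem CycRep.count {V : Type*} [DecidableEq V] {G : SimpleGraph V} (red : Sym2 V → Bool)
    {M C : Finset (Sym2 V)} {K : ℕ} {c : ℕ → V} (h : CycRep G M C K c) :
    (redCount red C : ℤ) + 3 * wSum red M C - 8 ≤
      4 * (((range (K - 2)).filter (fun x => 1 ≤ sw red M c x)).card : ℤ) ∧
    (blueCount red C : ℤ) - 3 * wSum red M C - 8 ≤
      4 * (((range (K - 2)).filter (fun x => ¬ 1 ≤ sw red M c x)).card : ℤ) := by
  obtain ⟨k, rfl⟩ : ∃ k, K = k + 2 := ⟨K - 2, by have := h.hK; omega⟩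
  have hinjOn : Set.InjOn (ed c) (range (2 * (k + 2)) : Finset ℕ) := by
    intro i hi j hj hij
    exact h.edinj i j (by simpa using hi) (by simpa using hj) hij
  set ρ : ℕ → ℤ := fun j => if red (ed c j) = true then 1 else 0 with hρ
  have hwt : ∀ j < 2 * (k + 2), wt red M (ed c j) = if Even j then - ρ j else ρ j := by
    intro j hj
    have := h.alt j hj
    simp only [wt, hρ, this]
    split_ifs <;> simp
  have hE : ∀ x, x < k + 2 → wt red M (ed c (2 * x)) = - ρ (2 * x) := by
    intro x hx
    rw [hwt _ (by omega), if_pos (by simp)]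
  have hO : ∀ x, x < k + 2 → wt red M (ed c (2 * x + 1)) = ρ (2 * x + 1) := by
    intro x hx
    rw [hwt _ (by omega), if_neg (by rw [Nat.even_iff]; omega)]
  have hred : (redCount red C : ℤ) = ∑ j ∈ range (2 * (k + 2)), ρ j := by
    rw [redCount, Finset.card_filter, h.eqC, Finset.sum_image hinjOn, Nat.cast_sum]
    refine Finset.sum_congr rfl (fun j _ => ?_)
    simp [hρ]
  have hrb : redCount red C + blueCount red C = 2 * (k + 2) := by
    have : C.card = 2 * (k + 2) := by
      conv_lhs => rw [h.eqC]
      rw [Finset.card_image_of_injOn hinjOn, Finset.card_range]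
    rw [← this, redCount, blueCount,
      ← Finset.card_filter_add_card_filter_not (s := C) (fun e => red e = true)]
    simp
  have hw : wSum red M C = ∑ j ∈ range (2 * (k + 2)), wt red M (ed c j) := by
    rw [wSum]
    conv_lhs => rw [h.eqC]
    rw [Finset.sum_image hinjOn]
  rw [sum_two_mul] at hred hw
  rw [Finset.sum_congr rfl (fun x hx => hE x (Finset.mem_range.1 hx)),
    Finset.sum_congr rfl (fun x hx => hO x (Finset.mem_range.1 hx)),
    Finset.sum_neg_distrib] at hw
  have := count_aux ρ (fun j => by simp only [hρ]; split_ifs <;> simp)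
    (fun j => by simp only [hρ]; split_ifs <;> simp) (sw red M c) k (by
      intro x hx
      have a1 := hO x (by omega)
      have a2 := hE (x + 1) (by omega)
      have a3 := hO (x + 1) (by omega)
      rw [show 2 * (x + 1) = 2 * x + 2 by ring] at a2 a3
      simp only [sw]
      rw [a1, a2, a3]; ring) _ _ rfl rfl
  rw [show k + 2 - 2 = k by omega]
  have hrb' : (redCount red C : ℤ) + blueCount red C = 2 * (k + 2) := by exact_mod_cast hrb
  constructor
  · linarith [this.1]
  · linarith [this.2]

theorem exists_big {τ : Type*} [DecidableEq τ] (𝒞 : Finset (Finset τ)) (P : τ → Prop)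
    [DecidablePred P] (t : ℕ) (ht : 0 < t) (hfew : 𝒞.card ≤ 10 * t ^ 3)
    (hbig : 1000 * t ^ 6 ≤ ((𝒞.biUnion id).filter P).card) :
    ∃ C ∈ 𝒞, 100 * t ^ 3 ≤ (C.filter P).card := by
  by_contra hcon
  push Not at hcon
  have h1 : ((𝒞.biUnion id).filter P).card ≤ ∑ C ∈ 𝒞, (C.filter P).card := by
    rw [Finset.filter_biUnion]
    exact Finset.card_biUnion_le
  have h2 : ∑ C ∈ 𝒞, (C.filter P).card ≤ 𝒞.card * (100 * t ^ 3 - 1) := by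
    rw [← smul_eq_mul]
    exact Finset.sum_le_card_nsmul _ _ _ (fun C hC => by have := hcon C hC; omega)
  have h3 : 𝒞.card * (100 * t ^ 3 - 1) ≤ 10 * t ^ 3 * (100 * t ^ 3 - 1) :=
    Nat.mul_le_mul_right _ hfew
  have hpos : 0 < t ^ 3 := by positivity
  have h4 : 10 * t ^ 3 * (100 * t ^ 3 - 1) < 10 * t ^ 3 * (100 * t ^ 3) :=
    Nat.mul_lt_mul_of_pos_left (by omega) (by omega)
  have h5 : 10 * t ^ 3 * (100 * t ^ 3) = 1000 * t ^ 6 := by ring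
  omega

/-- Split two large sets of positions on one cycle into two separated halves. -/
theorem split_aux (A B : Finset ℕ) (n : ℕ) (hA : 2 * n + 1 ≤ A.card) (hB : 2 * n + 1 ≤ B.card) :
    ∃ A' ⊆ A, ∃ B' ⊆ B, n ≤ A'.card ∧ n ≤ B'.card ∧
      ((∀ x ∈ A', ∀ y ∈ B', x + 2 ≤ y) ∨ (∀ x ∈ A', ∀ y ∈ B', y + 2 ≤ x)) := by
  obtain ⟨c, hc⟩ := cut_aux A n (by omega)
  have hs := Finset.card_filter_add_card_filter_not (s := A) (fun k => k < c)
  have hs' := Finset.card_filter_add_card_filter_not (s := B) (fun k => k < c)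
  have drop : ∀ D : Finset ℕ, (D.filter (fun k => ¬ k < c)).card ≤
      (D.filter (fun k => ¬ k < c + 1)).card + 1 := by
    intro D
    refine le_trans (Finset.card_le_card ?_) (Finset.card_insert_le c _)
    intro k hk
    rw [Finset.mem_filter] at hk
    rw [Finset.mem_insert, Finset.mem_filter]
    rcases Nat.lt_or_ge c k with h | h
    · right; exact ⟨hk.1, by omega⟩
    · left; omega
  have dA := drop A
  have dB := drop B
  rcases Nat.lt_or_ge (B.filter (fun k => k < c)).card n with h | h
  · refine ⟨_, Finset.filter_subset (fun k => k < c) A, _,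
      Finset.filter_subset (fun k => ¬ k < c + 1) B, by omega, by omega, Or.inl ?_⟩
    intro x hx y hy
    rw [Finset.mem_filter] at hx hy
    omega
  · refine ⟨_, Finset.filter_subset (fun k => ¬ k < c + 1) A, _,
      Finset.filter_subset (fun k => k < c) B, by omega, by omega, Or.inr ?_⟩
    intro x hx y hy
    rw [Finset.mem_filter] at hx hy
    omega

/-- Not many red and blue edges: let `t ≥ 8·4^α` and `𝒞` a set of vertex-disjoint
`M`-alternating cycles with `|𝒞| ≤ 10t³`, `|w_M(C)| ≤ 2t` for every `C ∈ 𝒞`, whose cycles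
contain at least `1000t⁶` blue and at least `1000t⁶` red edges in total. Then `𝒞` contains
a 0-skip set. -/
theorem many_red_blue_gives_zero_skip_set
    {V : Type*} [Fintype V] [DecidableEq V] (G : SimpleGraph V) (red : Sym2 V → Bool)
    (t : ℕ) (ht : 8 * 4 ^ indepNum G ≤ t)
    (M : Finset (Sym2 V)) (hM : IsPM G M)
    (𝒞 : Finset (Finset (Sym2 V))) (h𝒞 : IsAltCycleSet G M 𝒞)
    (hfew : 𝒞.card ≤ 10 * t ^ 3)
    (heach : ∀ C ∈ 𝒞, |wSum red M C| ≤ (2 * t : ℤ))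
    (hblue : 1000 * t ^ 6 ≤ blueCount red (𝒞.biUnion id))
    (hred : 1000 * t ^ 6 ≤ redCount red (𝒞.biUnion id)) :
    HasZeroSkipSet G red M 𝒞 := by
  have ht8 : 8 ≤ t := le_trans (by have := Nat.one_le_pow (indepNum G) 4 (by norm_num); omega) ht
  obtain ⟨C1, hC1, hr1⟩ := exists_big 𝒞 (fun e => red e = true) t (by omega) hfew hred
  obtain ⟨C2, hC2, hb2⟩ := exists_big 𝒞 (fun e => red e = false) t (by omega) hfew hblue
  have hr1' : 100 * t ^ 3 ≤ redCount red C1 := hr1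
  have hb2' : 100 * t ^ 3 ≤ blueCount red C2 := hb2
  have ht3 : 64 * t ≤ t ^ 3 := by
    have : 8 * 8 ≤ t * t := Nat.mul_le_mul ht8 ht8
    calc 64 * t ≤ (t * t) * t := Nat.mul_le_mul_right _ (by omega)
      _ = t ^ 3 := by ring
  set R := 4 ^ indepNum G with hR
  have hsize : ∀ (n r : ℕ) (w : ℤ), 100 * t ^ 3 ≤ r → -(6 * t : ℤ) ≤ w →
      (r : ℤ) + w - 8 ≤ 4 * (n : ℤ) → 2 * (2 * (13 * R)) + 1 ≤ n := by
    intro n r w h1 h2 h3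
    omega
  -- choose representations, the same one when the cycles coincide
  have hrep : ∀ C ∈ 𝒞, ∃ z : ℕ × (ℕ → V), CycRep G M C z.1 z.2 := by
    intro C hC
    obtain ⟨K, c, h⟩ := exists_cycRep (h𝒞.1 C hC)
    exact ⟨(K, c), h⟩
  choose Z hZ using hrep
  have h1 := hZ C1 hC1
  have h2 := hZ C2 hC2
  have hw1 := abs_le.1 (heach C1 hC1)
  have hw2 := abs_le.1 (heach C2 hC2)
  set P : Finset ℕ := (range ((Z C1 hC1).1 - 2)).filter
    (fun x => 1 ≤ sw red M (Z C1 hC1).2 x) with hP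
  set N : Finset ℕ := (range ((Z C2 hC2).1 - 2)).filter
    (fun x => ¬ 1 ≤ sw red M (Z C2 hC2).2 x) with hN
  have hPc : 2 * (2 * (13 * R)) + 1 ≤ P.card :=
    hsize _ _ (3 * wSum red M C1) hr1' (by linarith [hw1.1]) (h1.count red).1
  have hNc : 2 * (2 * (13 * R)) + 1 ≤ N.card :=
    hsize _ _ (-(3 * wSum red M C2)) hb2' (by linarith [hw2.2])
      (by have := (h2.count red).2; linarith)
  have hPK : ∀ x ∈ P, x + 2 < (Z C1 hC1).1 := by
    intro x hx
    rw [hP, Finset.mem_filter, Finset.mem_range] at hx; omega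
  have hNK : ∀ x ∈ N, x + 2 < (Z C2 hC2).1 := by
    intro x hx
    rw [hN, Finset.mem_filter, Finset.mem_range] at hx; omega
  have hPs : ∀ x ∈ P, 1 ≤ sw red M (Z C1 hC1).2 x := fun x hx => (Finset.mem_filter.1 hx).2
  have hNs : ∀ x ∈ N, sw red M (Z C2 hC2).2 x ≤ 0 := fun x hx => by
    have := (Finset.mem_filter.1 hx).2; omega
  obtain ⟨P', hP', N', hN', cP, cN, hsep⟩ := split_aux P N _ hPc hNc
  obtain ⟨L1, n1, loc1, d1⟩ := extract (red := red) hM hC1 h1 P' (fun x hx => hPK x (hP' hx)) 13 cP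
  obtain ⟨L2, n2, loc2, d2⟩ := extract (red := red) hM hC2 h2 N' (fun x hx => hNK x (hN' hx)) 13 cN
  refine zero_of_lists L1 L2 n1.ge n2.ge ?_ ?_ ?_
  · intro T hT
    obtain ⟨x, y, -, hx, hy, -, -, -, hw⟩ := loc1 T hT
    have a1 := hPs x (hP' hx)
    have a2 := hPs y (hP' hy)
    linarith
  · intro T hT
    obtain ⟨x, y, -, hx, hy, -, -, hw, -⟩ := loc2 T hT
    have a1 := hNs x (hN' hx)
    have a2 := hNs y (hN' hy)
    linarith
  · rw [List.pairwise_append]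
    refine ⟨d1, d2, ?_⟩
    intro T1 hT1 T2 hT2
    obtain ⟨x1, y1, e1, hx1, hy1, hxy1, l1, -⟩ := loc1 T1 hT1
    obtain ⟨x2, y2, e2, hx2, hy2, hxy2, l2, -⟩ := loc2 T2 hT2
    by_cases hCC : C1 = C2
    · subst hCC
      refine skipOn_disj h1 T1 T2 e1 e2 x1 y1 x2 y2 (by omega) (hPK _ (hP' hy1)) (by omega)
        (hNK _ (hN' hy2)) l1 l2 ?_
      rcases hsep with hsep | hsep
      · left; exact hsep _ hy1 _ hx2
      · right; exact hsep _ hx1 _ hy2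
    · left; rw [e1, e2]; exact hCC
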